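/- arXiv:1409.3159 — 2 statements merged into one kernel-verified Lean document; each statement's English description precedes it below -/
import Mathlib

section
/- Let G be a connected graph with t_k ≥ t_{k+1} − 1 for some positive integer k. Then every largest k-ended tree in G is a dominating tree, i.e., the set of vertices of G not on the tree is an independent set. (Proposition 2) -/
/-!
If some edge of the connected graph `G` misses the `k`-ended tree `H`, then following a path from
`H` to that edge gives `x ∈ H` and `y, z ∉ H` with `x ~ y ~ z`. When `H` is a cycle of order at
least three, delete one of its edges at `x`; in all cases this leaves a tree on the vertices of `H`
with at most `k` end-vertices other than `x`. Hanging the path `y z` at `x` creates the end-vertex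
`z`, while `x` stops being one, unless the tree was the single vertex `x`. So there is a
`(k + 1)`-ended tree of order `|H| + 2`, and `t_{k+1} ≥ |H| + 2`.
-/

open SimpleGraph

variable {V : Type*}

/-- A set of vertices is independent in `G`. -/
def IsIndSet (G : SimpleGraph V) (s : Set V) : Prop :=
  ∀ ⦃u⦄, u ∈ s → ∀ ⦃v⦄, v ∈ s → ¬ G.Adj u v

/-- The number of end-vertices (vertices of degree one) of a subgraph `H`. -/
noncomputable def endVertexCount {G : SimpleGraph V} (H : G.Subgraph) : ℕ :=
  {v : V | v ∈ H.verts ∧ (H.neighborSet v).ncard = 1}.ncard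

/-- `H` is a cycle; a single vertex and a single edge are regarded as
simple cycles of orders 1 and 2, respectively. -/
def IsCycleSubgraph {G : SimpleGraph V} (H : G.Subgraph) : Prop :=
  H.Connected ∧ (H.verts.ncard ≤ 2 ∨ ∀ v ∈ H.verts, (H.neighborSet v).ncard = 2)

/-- `H` is a `k`-ended tree in `G`: a tree with at most `k` end-vertices (leaves);
a cycle is regarded as a 1-ended tree. -/
def IsKEndedTree (G : SimpleGraph V) (k : ℕ) (H : G.Subgraph) : Prop :=
  (H.coe.IsTree ∧ endVertexCount H ≤ k) ∨ (1 ≤ k ∧ IsCycleSubgraph H)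

/-- `t k`: the order of a largest `k`-ended tree in `G`. -/
noncomputable def maxKEndedOrder (G : SimpleGraph V) (k : ℕ) : ℕ :=
  sSup {n | ∃ H : G.Subgraph, IsKEndedTree G k H ∧ H.verts.ncard = n}

/-- `σ m`: the minimum degree sum over independent sets of `m` vertices of `G`,
and `+∞` if the independence number of `G` is less than `m`. -/
noncomputable def minDegreeSum (G : SimpleGraph V) [Fintype V] [DecidableRel G.Adj]
    (m : ℕ) : ℕ∞ :=
  ⨅ s ∈ {s : Finset V | s.card = m ∧ IsIndSet G ↑s}, (∑ v ∈ s, G.degree v : ℕ∞)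

section

variable {G : SimpleGraph V} {H T : G.Subgraph} {k : ℕ} {x y z w : V}

theorem le_maxKEndedOrder
    (hbdd : BddAbove {n | ∃ K : G.Subgraph, IsKEndedTree G k K ∧ K.verts.ncard = n})
    (hH : IsKEndedTree G k H) : H.verts.ncard ≤ maxKEndedOrder G k :=
  le_csSup hbdd ⟨H, hH, rfl⟩

theorem IsKEndedTree.connected (hH : IsKEndedTree G k H) : H.Connected :=
  hH.elim (fun h => ⟨h.1.connected⟩) (fun h => h.2.1)

theorem exists_adj_adj_of_not_isIndSet_compl (hG : G.Connected) {S : Set V} (hS : S.Nonempty)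
    (hind : ¬ IsIndSet G Sᶜ) : ∃ x ∈ S, ∃ y ∉ S, ∃ z ∉ S, G.Adj x y ∧ G.Adj y z := by
  simp only [IsIndSet, Set.mem_compl_iff, not_forall, not_not] at hind
  obtain ⟨u, hu, v, hv, huv⟩ := hind
  obtain ⟨a, ha⟩ := hS
  obtain ⟨p⟩ := hG.preconnected a u
  obtain ⟨d, -, hfst, hsnd⟩ := p.exists_boundary_dart {b | b ∈ S ∨ ∀ c ∉ S, ¬ G.Adj b c}
    (Or.inl ha) (fun h => h.elim hu fun h => h v hv huv)
  simp only [Set.mem_ofPred_eq, not_or, not_forall, not_not] at hfst hsnd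
  obtain ⟨hy, z, hz, hyz⟩ := hsnd
  exact ⟨d.fst, hfst.resolve_right fun h => h _ hy d.adj, d.snd, hy, z, hz, d.adj, hyz⟩

/-- The set of end-vertices counted by `endVertexCount`. -/
def endVertices (H : G.Subgraph) : Set V :=
  {v | v ∈ H.verts ∧ (H.neighborSet v).ncard = 1}

theorem endVertices_subset_verts : endVertices H ⊆ H.verts := fun _ h => h.1

theorem endVertexCount_eq_ncard_endVertices : endVertexCount H = (endVertices H).ncard := rfl

theorem isAcyclic_coe_iff_isAcyclic_spanningCoe :
    H.coe.IsAcyclic ↔ H.spanningCoe.IsAcyclic := by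
  refine ⟨fun h v p hp => ?_, fun h => h.embedding H.coeEmbeddingSpanningCoe⟩
  have hsupp : ∀ u ∈ p.support, u ∈ H.verts := fun u hu => by
    obtain ⟨b, -, hub⟩ := adj_of_mem_walk_support p hp.not_nil hu
    exact H.edge_vert hub
  refine h (p.induce H.verts hsupp) (Walk.IsCycle.of_map (f := (Embedding.induce _).toHom) ?_)
  rwa [Walk.map_induce]

theorem isTree_coe_iff_connected_and_ncard (hfin : H.verts.Finite) :
    H.coe.IsTree ↔ H.Connected ∧ H.edgeSet.ncard + 1 = H.verts.ncard := by
  have := hfin.to_subtype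
  rw [isTree_iff_connected_and_card, Subgraph.connected_iff', ← H.image_coe_edgeSet_coe,
    Set.ncard_image_of_injective _ (Sym2.map.injective Subtype.val_injective),
    Nat.card_coe_set_eq, Nat.card_coe_set_eq]

theorem isTree_coe_of_ncard_verts_le_two (hfin : H.verts.Finite) (hH : H.Connected)
    (hle : H.verts.ncard ≤ 2) : H.coe.IsTree := by
  refine ⟨hH.coe, IsAcyclic.of_card_le_two ?_⟩
  rw [ENat.card_coe_set_eq, ← hfin.cast_ncard_eq]
  exact_mod_cast hle

theorem verts_sup_subgraphOfAdj (hx : x ∈ T.verts) (hxy : G.Adj x y) :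
    (T ⊔ G.subgraphOfAdj hxy).verts = insert y T.verts := by
  rw [Subgraph.verts_sup, subgraphOfAdj_verts, Set.union_insert, Set.union_singleton,
    Set.insert_eq_of_mem (Set.mem_insert_of_mem y hx)]

theorem isTree_coe_sup_subgraphOfAdj (hT : T.coe.IsTree) (hx : x ∈ T.verts) (hy : y ∉ T.verts)
    (hxy : G.Adj x y) : (T ⊔ G.subgraphOfAdj hxy).coe.IsTree := by
  have hconn : (T ⊔ G.subgraphOfAdj hxy).Connected :=
    Subgraph.connected_sup ⟨hT.preconnected⟩
      (Subgraph.subgraphOfAdj_connected hxy).preconnected ⟨x, hx, by simp⟩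
  have hnreach : ¬ T.spanningCoe.Reachable x y := by
    rintro ⟨p⟩
    exact hy (T.edge_vert (p.adj_penultimate (Walk.not_nil_of_ne hxy.ne)).symm)
  refine ⟨hconn.coe, isAcyclic_coe_iff_isAcyclic_spanningCoe.2 ?_⟩
  rw [Subgraph.sup_spanningCoe, Subgraph.spanningCoe_subgraphOfAdj]
  exact (isAcyclic_coe_iff_isAcyclic_spanningCoe.1 hT.isAcyclic).sup_edge_of_not_reachable hnreach

theorem endVertices_sup_subgraphOfAdj_subset (hx : (T.neighborSet x).Nonempty) (hy : y ∉ T.verts)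
    (hxy : G.Adj x y) :
    endVertices (T ⊔ G.subgraphOfAdj hxy) ⊆ insert y (endVertices T \ {x}) := by
  obtain ⟨u, hu⟩ := hx
  rintro v ⟨hv, hdeg⟩
  rw [verts_sup_subgraphOfAdj (T.edge_vert hu) hxy] at hv
  refine hv.imp_right fun hvT => ?_
  have hvx : v ≠ x := by
    rintro rfl
    obtain ⟨b, hb⟩ := Set.ncard_eq_one.1 hdeg
    have hub : u = b := hb.subset (Or.inl hu)
    have hyb : y = b := hb.subset (Or.inr (by simp))
    exact hy (hyb ▸ hub ▸ T.edge_vert hu.symm)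
  have hvy : v ≠ y := fun h => hy (h ▸ hvT)
  rw [Subgraph.neighborSet_sup, neighborSet_subgraphOfAdj_of_ne_of_ne hxy hvx hvy,
    Set.union_empty] at hdeg
  exact ⟨⟨hvT, hdeg⟩, hvx⟩

-- The maximum accounts for `T` being the single vertex `x`, which remains an end-vertex.
theorem ncard_endVertices_sup_subgraphOfAdj_sdiff_le (hfin : T.verts.Finite)
    (hT : T.Preconnected) (hx : x ∈ T.verts) (hy : y ∉ T.verts) (hxy : G.Adj x y) :
    (endVertices (T ⊔ G.subgraphOfAdj hxy) \ {y}).ncard ≤ max 1 (endVertices T \ {x}).ncard := by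
  have := hfin.to_subtype
  rcases T.verts.subsingleton_or_nontrivial with hsub | hnontriv
  · have hends : endVertices (T ⊔ G.subgraphOfAdj hxy) \ {y} ⊆ T.verts := by
      rw [Set.sdiff_singleton_subset_iff, ← verts_sup_subgraphOfAdj hx hxy]
      exact endVertices_subset_verts
    exact le_max_of_le_left ((Set.ncard_le_ncard hends hfin).trans
      (Set.ncard_le_one_iff_subsingleton.2 hsub))
  · have := hnontriv.coe_sort
    obtain ⟨u, hu⟩ := hT.exists_adj_of_nontrivial ⟨x, hx⟩
    exact le_max_of_le_right (Set.ncard_le_ncard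
      (Set.sdiff_singleton_subset_iff.2 (endVertices_sup_subgraphOfAdj_subset ⟨u, hu⟩ hy hxy))
      (hfin.subset endVertices_subset_verts).sdiff)

theorem exists_isTree_ncard_verts_add_two (hfin : T.verts.Finite) (hT : T.coe.IsTree)
    (hx : x ∈ T.verts) (hy : y ∉ T.verts) (hz : z ∉ T.verts) (hxy : G.Adj x y)
    (hyz : G.Adj y z) :
    ∃ K : G.Subgraph, K.coe.IsTree ∧ K.verts.ncard = T.verts.ncard + 2 ∧
      (endVertices K).ncard ≤ max 1 (endVertices T \ {x}).ncard + 1 := by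
  set S := T ⊔ G.subgraphOfAdj hxy
  have hverts : S.verts = insert y T.verts := verts_sup_subgraphOfAdj hx hxy
  have hSfin : S.verts.Finite := hverts ▸ hfin.insert y
  have hyS : y ∈ S.verts := hverts ▸ Set.mem_insert y _
  have hzS : z ∉ S.verts := by
    rw [hverts]
    exact fun h => h.elim hyz.ne' hz
  have hSy : (S.neighborSet y).Nonempty := ⟨x, Or.inr (by simp)⟩
  refine ⟨S ⊔ G.subgraphOfAdj hyz, isTree_coe_sup_subgraphOfAdj
    (isTree_coe_sup_subgraphOfAdj hT hx hy hxy) hyS hzS hyz, ?_, ?_⟩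
  · rw [verts_sup_subgraphOfAdj hyS, Set.ncard_insert_of_notMem hzS hSfin, hverts,
      Set.ncard_insert_of_notMem hy hfin]
  · calc (endVertices (S ⊔ G.subgraphOfAdj hyz)).ncard
      _ ≤ (insert z (endVertices S \ {y})).ncard :=
        Set.ncard_le_ncard (endVertices_sup_subgraphOfAdj_subset hSy hzS hyz)
          ((hSfin.subset endVertices_subset_verts).sdiff.insert z)
      _ ≤ (endVertices S \ {y}).ncard + 1 := Set.ncard_insert_le _ _
      _ ≤ max 1 (endVertices T \ {x}).ncard + 1 := by
        gcongr
        exact ncard_endVertices_sup_subgraphOfAdj_sdiff_le hfin ⟨hT.preconnected⟩ hx hy hxy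

theorem ncard_neighborSet_coe (v : H.verts) :
    (H.coe.neighborSet v).ncard = (H.neighborSet v).ncard :=
  Nat.card_congr (Subgraph.coeNeighborSetEquiv v)

theorem ncard_edgeSet_of_ncard_neighborSet_eq_two (hfin : H.verts.Finite)
    (h : ∀ v ∈ H.verts, (H.neighborSet v).ncard = 2) : H.edgeSet.ncard = H.verts.ncard := by
  classical
  have := hfin.fintype
  have hdeg (v : H.verts) [Fintype (H.coe.neighborSet v)] : H.coe.degree v = 2 := by
    rw [← card_neighborSet_eq_degree, ← Nat.card_eq_fintype_card, Nat.card_coe_set_eq,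
      ncard_neighborSet_coe, h v v.2]
  have hsum := H.coe.sum_degrees_eq_twice_card_edges
  simp only [hdeg, Finset.sum_const, Finset.card_univ, smul_eq_mul] at hsum
  have hedges : H.edgeSet.ncard = H.coe.edgeFinset.card := by
    rw [← H.image_coe_edgeSet_coe,
      Set.ncard_image_of_injective _ (Sym2.map.injective Subtype.val_injective),
      ← coe_edgeFinset, Set.ncard_coe_finset]
  rw [hedges, ← Nat.card_coe_set_eq, Nat.card_eq_fintype_card]
  lia

theorem connected_deleteEdges_of_ncard_neighborSet_eq_two (hfin : H.verts.Finite)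
    (hH : H.Connected) (h : ∀ v ∈ H.verts, (H.neighborSet v).ncard = 2) (hxw : H.Adj x w) :
    (H.deleteEdges {s(x, w)}).Connected := by
  have := hfin.to_subtype
  have hcycles : H.coe.IsCycles := fun v _ => (ncard_neighborSet_coe v).trans (h v v.2)
  have hconn := hH.coe.connected_delete_edge_of_not_isBridge
    fun hbridge => hbridge (hcycles.reachable_deleteEdges hxw.coe)
  rw [Subgraph.deleteEdges_coe_eq, Set.image_singleton, Sym2.map_mk] at hconn
  exact ⟨hconn⟩

theorem isTree_coe_deleteEdges_of_ncard_neighborSet_eq_two (hfin : H.verts.Finite)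
    (hH : H.Connected) (h : ∀ v ∈ H.verts, (H.neighborSet v).ncard = 2) (hxw : H.Adj x w) :
    (H.deleteEdges {s(x, w)}).coe.IsTree := by
  have hedge : (H.deleteEdges {s(x, w)}).edgeSet = H.edgeSet \ {s(x, w)} := by
    ext e
    induction e using Sym2.ind with | h a b => simp
  have hEfin : H.edgeSet.Finite := Set.finite_of_ncard_pos <| by
    rw [ncard_edgeSet_of_ncard_neighborSet_eq_two hfin h, Set.ncard_pos hfin]
    exact ⟨x, hxw.fst_mem⟩
  refine (isTree_coe_iff_connected_and_ncard (H := H.deleteEdges _) hfin).2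
    ⟨connected_deleteEdges_of_ncard_neighborSet_eq_two hfin hH h hxw, ?_⟩
  rw [hedge, Set.ncard_sdiff_singleton_add_one (Subgraph.mem_edgeSet.2 hxw) hEfin,
    Subgraph.deleteEdges_verts, ncard_edgeSet_of_ncard_neighborSet_eq_two hfin h]

theorem endVertices_deleteEdges_subset :
    endVertices (H.deleteEdges {s(x, w)}) ⊆ insert x (insert w (endVertices H)) := by
  rintro v ⟨hv, hdeg⟩
  by_cases hvx : v = x
  · exact Or.inl hvx
  by_cases hvw : v = w
  · exact Or.inr (Or.inl hvw)
  have hnbr : (H.deleteEdges {s(x, w)}).neighborSet v = H.neighborSet v := by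
    ext b
    simp [hvx, hvw]
  exact Or.inr (Or.inr ⟨hv, hnbr ▸ hdeg⟩)

theorem exists_isTree_endVertices_subset_pair (hfin : H.verts.Finite) (hH : H.Connected)
    (h : ∀ v ∈ H.verts, (H.neighborSet v).ncard = 2) (hx : x ∈ H.verts) :
    ∃ (T : G.Subgraph) (w : V), T.coe.IsTree ∧ T.verts = H.verts ∧ endVertices T ⊆ {x, w} := by
  obtain ⟨w, hxw⟩ : (H.neighborSet x).Nonempty :=
    Set.nonempty_of_ncard_ne_zero (by rw [h x hx]; decide)
  have hempty : endVertices H = ∅ :=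
    Set.eq_empty_of_forall_notMem fun v hv => by simpa [h v hv.1] using hv.2
  refine ⟨H.deleteEdges {s(x, w)}, w,
    isTree_coe_deleteEdges_of_ncard_neighborSet_eq_two hfin hH h hxw, rfl, ?_⟩
  simpa only [hempty, insert_empty_eq] using endVertices_deleteEdges_subset (H := H) (x := x)

theorem IsKEndedTree.exists_isTree_ncard_endVertices_sdiff_le (hH : IsKEndedTree G k H)
    (hk : 1 ≤ k) (hfin : H.verts.Finite) (hx : x ∈ H.verts) :
    ∃ T : G.Subgraph, T.coe.IsTree ∧ T.verts = H.verts ∧ (endVertices T \ {x}).ncard ≤ k := by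
  rcases hH with ⟨hT, hle⟩ | ⟨-, hconn, hle | hreg⟩
  · exact ⟨H, hT, rfl, (Set.ncard_le_ncard Set.sdiff_subset
      (hfin.subset endVertices_subset_verts)).trans hle⟩
  · refine ⟨H, isTree_coe_of_ncard_verts_le_two hfin hconn hle, rfl, ?_⟩
    have hends : (endVertices H \ {x}).ncard ≤ (H.verts \ {x}).ncard :=
      Set.ncard_le_ncard (Set.sdiff_subset_sdiff_left endVertices_subset_verts) hfin.sdiff
    have hverts := Set.ncard_sdiff_singleton_add_one hx hfin
    lia
  · obtain ⟨T, w, hT, hverts, hends⟩ := exists_isTree_endVertices_subset_pair hfin hconn hreg hx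
    refine ⟨T, hT, hverts, le_trans ?_ hk⟩
    rw [← Set.ncard_singleton w]
    exact Set.ncard_le_ncard (Set.sdiff_singleton_subset_iff.2 hends)

theorem IsKEndedTree.exists_ncard_verts_add_two (hH : IsKEndedTree G k H) (hk : 1 ≤ k)
    (hfin : H.verts.Finite) (hx : x ∈ H.verts) (hy : y ∉ H.verts) (hz : z ∉ H.verts)
    (hxy : G.Adj x y) (hyz : G.Adj y z) :
    ∃ K : G.Subgraph, IsKEndedTree G (k + 1) K ∧ K.verts.ncard = H.verts.ncard + 2 := by
  obtain ⟨T, hT, hverts, hends⟩ := hH.exists_isTree_ncard_endVertices_sdiff_le hk hfin hx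
  rw [← hverts] at hfin hx hy hz ⊢
  obtain ⟨K, hK, hcard, hKends⟩ := exists_isTree_ncard_verts_add_two hfin hT hx hy hz hxy hyz
  refine ⟨K, Or.inl ⟨hK, ?_⟩, hcard⟩
  rw [endVertexCount_eq_ncard_endVertices]
  exact hKends.trans (Nat.succ_le_succ (max_le hk hends))

theorem proposition2_general (hG : G.Connected) (hk : 1 ≤ k)
    (hbdd : BddAbove {n | ∃ K : G.Subgraph, IsKEndedTree G (k + 1) K ∧ K.verts.ncard = n})
    (hH : IsKEndedTree G k H) (hfin : H.verts.Finite)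
    (h : maxKEndedOrder G (k + 1) ≤ H.verts.ncard + 1) : IsIndSet G H.vertsᶜ := by
  by_contra hind
  obtain ⟨x, hx, y, hy, z, hz, hxy, hyz⟩ :=
    exists_adj_adj_of_not_isIndSet_compl hG hH.connected.nonempty hind
  obtain ⟨K, hK, hcard⟩ := hH.exists_ncard_verts_add_two hk hfin hx hy hz hxy hyz
  have hle := le_maxKEndedOrder hbdd hK
  lia

end

/-- **Proposition 2.** If `G` is connected and `t_k ≥ t_{k+1} - 1`, then every
largest `k`-ended tree in `G` is a dominating tree. -/
theorem proposition2 [Fintype V] (G : SimpleGraph V) (hG : G.Connected)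
    (k : ℕ) (hk : 1 ≤ k)
    (h : maxKEndedOrder G k + 1 ≥ maxKEndedOrder G (k + 1)) :
    ∀ H : G.Subgraph, IsKEndedTree G k H → H.verts.ncard = maxKEndedOrder G k →
      IsIndSet G H.vertsᶜ := by
  intro H hH hcard
  have hbdd : BddAbove {n | ∃ K : G.Subgraph, IsKEndedTree G (k + 1) K ∧ K.verts.ncard = n} :=
    ⟨Nat.card V, by rintro _ ⟨K, -, rfl⟩; exact Set.ncard_le_card _⟩
  exact proposition2_general hG hk hbdd hH H.verts.toFinite (hcard ▸ h)
end

section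
/- Let G be a connected graph. Then for each integer k ≥ 2, t_k ≥ (k/(k+1))·t_{k+1} + 1/(k+1). (Corollary 2) -/
open SimpleGraph

variable {V : Type*}

/-!
Let `T` be a finite tree with `ℓ ≥ 3` leaves and let `r` be a vertex of degree at least three.
Every vertex of `T` lies on the path from `r` to some leaf. For a leaf `v`, let `S v` be the union
of the paths from `r` to the leaves other than `v`. A vertex outside `S v` lies on the path from
`r` to `v` and on no other of these paths, so the complements of the sets `S v` are pairwise
disjoint; as they also avoid `r`, one of them has at most `(|T| - 1) / ℓ` elements. Each `S v` is a
subtree of `T` all of whose leaves are leaves of `T` other than `v`: an inner vertex of a path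
keeps two neighbours, and `r` loses at most one of its neighbours. Applied to a largest
`(k + 1)`-ended tree with exactly `k + 1` leaves, this yields a `k`-ended tree of the required
order.
-/

/-- The leaves, or end-vertices, of a graph: its vertices of degree one. -/
def leaves (G : SimpleGraph V) : Set V :=
  {v | (G.neighborSet v).ncard = 1}

/-- The union of all paths from `r` to vertices of `A`; in a tree, for nonempty `A`, this is the
subtree spanned by `r` and `A`. -/
def pathHull (G : SimpleGraph V) (r : V) (A : Set V) : Set V :=
  {x | ∃ w ∈ A, ∃ p : G.Walk r w, p.IsPath ∧ x ∈ p.support}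

/-- The orders of the `k`-ended trees in `G`, so that `maxKEndedOrder G k` is their supremum;
an infinite subgraph counts with order `0`. -/
def kEndedOrders (G : SimpleGraph V) (k : ℕ) : Set ℕ :=
  {n | ∃ H : G.Subgraph, IsKEndedTree G k H ∧ H.verts.ncard = n}

lemma exists_ncard_mul_ncard_lt_card {ι α : Type*} [Finite α] {s : Set ι} (hs : s.Nonempty)
    (hfin : s.Finite) {C : ι → Set α} (hC : s.PairwiseDisjoint C) {a : α}
    (ha : ∀ i ∈ s, a ∉ C i) : ∃ i ∈ s, s.ncard * (C i).ncard < Nat.card α := by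
  lift s to Finset ι using hfin
  obtain ⟨i, hi, hmin⟩ := s.exists_min_image (fun i => (C i).ncard) hs
  refine ⟨i, hi, ?_⟩
  calc (s : Set ι).ncard * (C i).ncard
      ≤ ∑ j ∈ s, (C j).ncard := by
        simpa using s.card_nsmul_le_sum (fun j => (C j).ncard) _ hmin
    _ = (⋃ j ∈ (s : Set ι), C j).ncard := by
        rw [s.finite_toSet.ncard_biUnion (fun _ _ => Set.toFinite _) hC, finsum_mem_coe_finset]
    _ < Nat.card α := Set.ncard_lt_card <|
        (Set.ne_univ_iff_exists_notMem _).2 ⟨a, by simpa only [Set.mem_iUnion₂, not_exists]⟩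

lemma ncard_neighborSet_of_iso {V' : Type*} {G : SimpleGraph V} {G' : SimpleGraph V'}
    (e : G ≃g G') (v : V) : (G'.neighborSet (e v)).ncard = (G.neighborSet v).ncard :=
  (Nat.card_congr (e.mapNeighborSet v)).symm

lemma ncard_leaves_of_iso {V' : Type*} {G : SimpleGraph V} {G' : SimpleGraph V'} (e : G ≃g G') :
    (leaves G).ncard = (leaves G').ncard :=
  Nat.card_congr <| e.toEquiv.subtypeEquiv fun v =>
    iff_of_eq (congrArg (· = 1) (ncard_neighborSet_of_iso e v).symm)

section Graph

variable {G : SimpleGraph V}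

lemma endVertexCount_eq_ncard_leaves_coe (H : G.Subgraph) :
    endVertexCount H = (leaves H.coe).ncard := by
  have ncard_neighborSet_coe (v : H.verts) :
      (H.coe.neighborSet v).ncard = (H.neighborSet v).ncard :=
    Nat.card_congr (Subgraph.coeNeighborSetEquiv v)
  rw [endVertexCount, ← Set.ncard_image_of_injective _ Subtype.val_injective]
  congr 1
  ext v
  simp [leaves, ncard_neighborSet_coe, and_comm]

lemma exists_three_le_ncard_neighborSet [Finite V] (hG : G.Connected)
    (hleaves : 3 ≤ (leaves G).ncard) : ∃ r, 3 ≤ (G.neighborSet r).ncard := by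
  classical
  have := Fintype.ofFinite V
  by_contra! hle
  have card_vert_le : Fintype.card V ≤ G.edgeFinset.card + 1 := by
    simpa only [Nat.card_eq_fintype_card, ← edgeFinset_card] using
      hG.card_vert_le_card_edgeSet_add_one
  have := G.sum_degrees_eq_twice_card_edges
  have degree_add_le (v : V) : G.degree v + (if v ∈ leaves G then 1 else 0) ≤ 2 := by
    have := hle v
    simp only [leaves, Set.mem_ofPred_eq, Set.ncard_eq_toFinset_card', Set.toFinset_card,
      card_neighborSet_eq_degree] at this ⊢
    split_ifs <;> omega
  have sum_le : ∑ v, G.degree v + (leaves G).ncard ≤ Fintype.card V * 2 := by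
    simpa [Finset.sum_add_distrib, Set.ncard_eq_toFinset_card'] using
      Finset.sum_le_card_nsmul Finset.univ _ 2 fun v _ => degree_add_le v
  omega

lemma start_mem_pathHull (hG : G.Connected) (r : V) {A : Set V} (hA : A.Nonempty) :
    r ∈ pathHull G r A := by
  obtain ⟨w, hw⟩ := hA
  obtain ⟨p, hp⟩ := hG.exists_isPath r w
  exact ⟨w, hw, p, hp, p.start_mem_support⟩

lemma connected_induce_pathHull (hG : G.Connected) (r : V) {A : Set V} (hA : A.Nonempty) :
    (G.induce (pathHull G r A)).Connected := by
  refine G.induce_connected_of_patches r (start_mem_pathHull hG r hA) ?_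
  rintro v ⟨w, hw, p, hp, hv⟩
  exact ⟨{x | x ∈ p.support}, fun x hx => ⟨w, hw, p, hp, hx⟩, p.start_mem_support, hv,
    p.connected_induce_support _ _⟩

lemma coe_mem_of_mem_leaves_induce_pathHull {r : V} {A : Set V} {x : pathHull G r A}
    (hx : x ∈ leaves (G.induce (pathHull G r A))) (hxr : ↑x ≠ r) : ↑x ∈ A := by
  obtain ⟨w, hw, p, hp, hxp⟩ := x.2
  by_contra hxA
  have hxw : ↑x ≠ w := fun h => hxA (h ▸ hw)
  have hpS : ∀ y ∈ p.support, y ∈ pathHull G r A := fun y hy => ⟨w, hw, p, hp, hy⟩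
  obtain ⟨y, hy⟩ := Set.ncard_eq_one.1 hx
  have hpath : (p.induce _ hpS).IsPath :=
    .of_map (f := (Embedding.induce _).toHom) (by rwa [Walk.map_induce])
  refine hpath.isTrail.not_mem_support_of_subsingleton_neighborSet (x := x)
    (fun h => hxr (congrArg Subtype.val h)) (fun h => hxw (congrArg Subtype.val h))
    (hy ▸ Set.subsingleton_singleton) ?_
  simpa using hxp

end Graph

section Tree

variable [Finite V] [Nontrivial V] {T : SimpleGraph V}

lemma pathHull_leaves_eq_univ (hT : T.IsTree) (r : V) :
    pathHull T r (leaves T) = Set.univ := by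
  classical
  have := Fintype.ofFinite V
  refine Set.eq_univ_of_forall fun x => ?_
  obtain ⟨p₀, hp₀⟩ := hT.connected.exists_isPath r x
  have : Nonempty {q : Σ w, T.Path r w // x ∈ q.2.1.support} :=
    ⟨⟨x, p₀, hp₀⟩, p₀.end_mem_support⟩
  -- The end of a longest path from `r` through `x` is a leaf.
  obtain ⟨⟨⟨w, p, hp⟩, hx⟩, hmax⟩ :=
    Finite.exists_max fun q : {q : Σ w, T.Path r w // x ∈ q.2.1.support} => q.1.2.1.length
  refine ⟨w, ?_, p, hp, hx⟩
  have eq_penultimate (y : V) (hy : T.Adj w y) : y = p.penultimate := by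
    refine hT.isAcyclic.eq_penultimate_of_adj_end hp hy (by_contra fun hyp => ?_)
    have := hmax ⟨⟨y, p.concat hy, hp.concat hyp hy⟩, p.support_subset_support_concat hy hx⟩
    simp at this
  obtain ⟨y, hy⟩ := hT.connected.preconnected.exists_adj_of_nontrivial w
  exact Set.ncard_eq_one.2 ⟨y, Set.eq_singleton_iff_unique_mem.2
    ⟨hy, fun z hz => (eq_penultimate z hz).trans (eq_penultimate y hy).symm⟩⟩

lemma exists_neighborSet_subset_insert_pathHull (hT : T.IsTree) (r v : V) :
    ∃ y, T.neighborSet r ⊆ insert y (pathHull T r (leaves T \ {v})) := by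
  obtain ⟨p, -, hp⟩ := hT.existsUnique_path r v
  refine ⟨p.snd, fun x hx => ?_⟩
  obtain ⟨w, hw, q, hq, hxq⟩ := (pathHull_leaves_eq_univ hT r).ge (Set.mem_univ x)
  by_cases hwv : w = v
  · subst hwv
    exact .inl (hp q hq ▸ hT.isAcyclic.eq_snd_of_adj_start hq hx hxq)
  · exact .inr ⟨w, ⟨hw, hwv⟩, q, hq, hxq⟩

lemma coe_ne_root_of_mem_leaves_induce_pathHull (hT : T.IsTree) {r v : V}
    (hr : 3 ≤ (T.neighborSet r).ncard) {x : pathHull T r (leaves T \ {v})}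
    (hx : x ∈ leaves (T.induce (pathHull T r (leaves T \ {v})))) : ↑x ≠ r := by
  intro hxr
  obtain ⟨y, hy⟩ := exists_neighborSet_subset_insert_pathHull hT r v
  have hsub : T.neighborSet r ⊆ insert y (Subtype.val '' (T.induce _).neighborSet x) :=
    fun z hz => (hy hz).imp_right fun hzS => ⟨⟨z, hzS⟩, by simpa [hxr] using hz, rfl⟩
  have hle : (T.neighborSet r).ncard ≤ ((T.induce _).neighborSet x).ncard + 1 := by
    rw [← Set.ncard_image_of_injective _ Subtype.val_injective]
    exact (Set.ncard_le_ncard hsub).trans (Set.ncard_insert_le _ _)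
  have hone : ((T.induce _).neighborSet x).ncard = 1 := hx
  omega

lemma ncard_leaves_induce_pathHull_lt (hT : T.IsTree) {r v : V}
    (hr : 3 ≤ (T.neighborSet r).ncard) (hv : v ∈ leaves T) :
    (leaves (T.induce (pathHull T r (leaves T \ {v})))).ncard < (leaves T).ncard := by
  set S := pathHull T r (leaves T \ {v})
  have image_subset : Subtype.val '' leaves (T.induce S) ⊆ leaves T \ {v} := by
    rintro _ ⟨x, hx, rfl⟩
    exact coe_mem_of_mem_leaves_induce_pathHull hx
      (coe_ne_root_of_mem_leaves_induce_pathHull hT hr hx)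
  calc (leaves (T.induce S)).ncard
      = (Subtype.val '' leaves (T.induce S)).ncard :=
        (Set.ncard_image_of_injective _ Subtype.val_injective).symm
    _ ≤ (leaves T \ {v}).ncard := Set.ncard_le_ncard image_subset
    _ < (leaves T).ncard := Set.ncard_sdiff_singleton_lt_of_mem hv

lemma pairwise_disjoint_compl_pathHull (hT : T.IsTree) (r : V) :
    Pairwise fun u v =>
      Disjoint (pathHull T r (leaves T \ {u}))ᶜ (pathHull T r (leaves T \ {v}))ᶜ := by
  refine fun u v huv => Set.disjoint_left.2 fun x hxu hxv => ?_
  obtain ⟨w, hw, hx⟩ := (pathHull_leaves_eq_univ hT r).ge (Set.mem_univ x)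
  obtain rfl : w = u := by_contra fun hwu => hxu ⟨w, ⟨hw, hwu⟩, hx⟩
  exact hxv ⟨w, ⟨hw, huv⟩, hx⟩

end Tree

lemma exists_isTree_induce_ncard_leaves_lt [Finite V] {T : SimpleGraph V} (hT : T.IsTree)
    (hleaves : 3 ≤ (leaves T).ncard) :
    ∃ S : Set V, (T.induce S).IsTree ∧ (leaves (T.induce S)).ncard < (leaves T).ncard ∧
      (leaves T).ncard * Sᶜ.ncard < Nat.card V := by
  obtain ⟨r, hr⟩ := exists_three_le_ncard_neighborSet hT.connected hleaves
  have : Nontrivial V := by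
    obtain ⟨y, hy⟩ := Set.nonempty_of_ncard_ne_zero (s := T.neighborSet r) (by omega)
    exact ⟨r, y, hy.ne⟩
  have diff_nonempty (v : V) : (leaves T \ {v}).Nonempty :=
    Set.exists_ne_of_one_lt_ncard (by omega) v
  obtain ⟨v, hv, hcard⟩ := exists_ncard_mul_ncard_lt_card
    (s := leaves T) (Set.nonempty_of_ncard_ne_zero (by omega)) (Set.toFinite _)
    ((pairwise_disjoint_compl_pathHull hT r).set_pairwise _)
    fun v _ => not_not.2 (start_mem_pathHull hT.connected r (diff_nonempty v))
  exact ⟨pathHull T r (leaves T \ {v}),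
    ⟨connected_induce_pathHull hT.connected r (diff_nonempty v), hT.isAcyclic.induce _⟩,
    ncard_leaves_induce_pathHull_lt hT hr hv, hcard⟩

section KEnded

variable {G : SimpleGraph V}

lemma exists_le_isTree_endVertexCount_lt {H : G.Subgraph} (hfin : H.verts.Finite)
    (hH : H.coe.IsTree) (hends : 3 ≤ endVertexCount H) :
    ∃ K ≤ H, K.coe.IsTree ∧ endVertexCount K < endVertexCount H ∧
      endVertexCount H * (H.verts \ K.verts).ncard < H.verts.ncard := by
  have := hfin.to_subtype
  rw [endVertexCount_eq_ncard_leaves_coe] at hends ⊢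
  obtain ⟨S, hS, hlt, hcard⟩ := exists_isTree_induce_ncard_leaves_lt hH hends
  obtain ⟨s, hs, rfl⟩ : ∃ s ⊆ H.verts, S = {v : H.verts | ↑v ∈ s} :=
    ⟨Subtype.val '' S, by simp, by simp⟩
  let e := Subgraph.coeInduceIso s hs
  refine ⟨H.induce s, ?_, e.isTree_iff.2 hS, ?_, ?_⟩
  · simpa using H.induce_mono_right hs
  · rwa [endVertexCount_eq_ncard_leaves_coe, ncard_leaves_of_iso e]
  · have image_compl : Subtype.val '' {v : H.verts | ↑v ∈ s}ᶜ = H.verts \ s :=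
      Set.image_compl_preimage.trans (congrArg (· \ s) Subtype.range_coe)
    rwa [Nat.card_coe_set_eq, ← Set.ncard_image_of_injective {v : H.verts | ↑v ∈ s}ᶜ
      Subtype.val_injective, image_compl] at hcard

lemma ncard_verts_le_maxKEndedOrder {k : ℕ} (hbdd : BddAbove (kEndedOrders G k))
    {H : G.Subgraph} (hH : IsKEndedTree G k H) : H.verts.ncard ≤ maxKEndedOrder G k :=
  le_csSup hbdd ⟨H, hH, rfl⟩

lemma bddAbove_kEndedOrders [Finite V] (G : SimpleGraph V) (k : ℕ) :
    BddAbove (kEndedOrders G k) := by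
  refine ⟨Nat.card V, ?_⟩
  rintro _ ⟨H, -, rfl⟩
  exact Set.ncard_le_card _

lemma isKEndedTree_singletonSubgraph (G : SimpleGraph V) {k : ℕ} (hk : 1 ≤ k) (v : V) :
    IsKEndedTree G k (G.singletonSubgraph v) :=
  .inr ⟨hk, Subgraph.singletonSubgraph_connected, .inl (by simp)⟩

lemma one_le_maxKEndedOrder [Nonempty V] {k : ℕ} (hk : 1 ≤ k)
    (hbdd : BddAbove (kEndedOrders G k)) : 1 ≤ maxKEndedOrder G k := by
  simpa using ncard_verts_le_maxKEndedOrder hbdd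
    (isKEndedTree_singletonSubgraph G hk (Classical.arbitrary V))

lemma mul_ncard_verts_add_one_le [Nonempty V] {k : ℕ} (hk : 2 ≤ k)
    (hbdd : BddAbove (kEndedOrders G k)) {H : G.Subgraph} (hH : IsKEndedTree G (k + 1) H) :
    k * H.verts.ncard + 1 ≤ (k + 1) * maxKEndedOrder G k := by
  have one_le := one_le_maxKEndedOrder (by omega) hbdd
  by_cases hHk : IsKEndedTree G k H
  · linarith [Nat.mul_le_mul_left k (ncard_verts_le_maxKEndedOrder hbdd hHk)]
  rcases H.verts.finite_or_infinite with hfin | hinf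
  · obtain ⟨hT, hle⟩ : H.coe.IsTree ∧ endVertexCount H ≤ k + 1 :=
      hH.resolve_right fun h => hHk (.inr ⟨by omega, h.2⟩)
    have hends : endVertexCount H = k + 1 :=
      le_antisymm hle (Nat.lt_of_not_le fun h => hHk (.inl ⟨hT, h⟩))
    obtain ⟨K, hKH, hK, hlt, hloss⟩ := exists_le_isTree_endVertexCount_lt hfin hT (by omega)
    rw [hends] at hlt hloss
    have hKle : K.verts.ncard ≤ maxKEndedOrder G k :=
      ncard_verts_le_maxKEndedOrder hbdd (.inl ⟨hK, Nat.le_of_lt_succ hlt⟩)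
    calc k * H.verts.ncard + 1
        ≤ (k + 1) * K.verts.ncard := by
          rw [← Set.ncard_sdiff_add_ncard_of_subset hKH.1 hfin] at hloss ⊢
          linarith
      _ ≤ (k + 1) * maxKEndedOrder G k := Nat.mul_le_mul_left _ hKle
  · rw [hinf.ncard, mul_zero, zero_add]
    exact Nat.mul_pos k.succ_pos one_le

end KEnded

theorem corollary2_general [Nonempty V] (G : SimpleGraph V) (k : ℕ) (hk : 2 ≤ k)
    (hbdd : BddAbove (kEndedOrders G k)) :
    ((k : ℚ) / (k + 1)) * maxKEndedOrder G (k + 1) + 1 / (k + 1) ≤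
      (maxKEndedOrder G k : ℚ) := by
  have mul_add_one_le : ∀ n ∈ kEndedOrders G (k + 1),
      k * n + 1 ≤ (k + 1) * maxKEndedOrder G k := by
    rintro _ ⟨H, hH, rfl⟩
    exact mul_ncard_verts_add_one_le hk hbdd hH
  have hmem : maxKEndedOrder G (k + 1) ∈ kEndedOrders G (k + 1) :=
    Nat.sSup_mem
      ⟨_, _, isKEndedTree_singletonSubgraph G (by omega) (Classical.arbitrary V), rfl⟩
      ⟨(k + 1) * maxKEndedOrder G k, fun n hn =>
        (Nat.le_mul_of_pos_left n (by omega)).trans (Nat.le_of_succ_le (mul_add_one_le n hn))⟩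
  have h : (k * maxKEndedOrder G (k + 1) + 1 : ℚ) ≤ (k + 1) * maxKEndedOrder G k := by
    exact_mod_cast mul_add_one_le _ hmem
  rw [div_mul_eq_mul_div, ← add_div, div_le_iff₀ (by positivity)]
  linarith

/-- **Corollary 2.** If `G` is connected and `k ≥ 2`, then
`t_k ≥ (k/(k+1)) t_{k+1} + 1/(k+1)`. -/
theorem corollary2 [Fintype V] (G : SimpleGraph V) (hG : G.Connected)
    (k : ℕ) (hk : 2 ≤ k) :
    ((k : ℚ) / (k + 1)) * maxKEndedOrder G (k + 1) + 1 / (k + 1) ≤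
      (maxKEndedOrder G k : ℚ) := by
  have := hG.nonempty
  exact corollary2_general G k hk (bddAbove_kEndedOrders G k)
end
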